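/- The subspace similarity in an SP-structure satisfies the continuity inequality s(A,B) ≤ s(A,C) + (1/2)√(1 − s(B,C)) + (1 − s(B,C)) for all subspaces A, B, C. -/

import Mathlib

variable {Ω : Type*}

/-- A set of pairwise orthogonal points. -/
def OrthoSet (s : Ω → Ω → ℝ) (A : Set Ω) : Prop :=
  ∀ x ∈ A, ∀ y ∈ A, x ≠ y → s x y = 0

/-- The subspace generated by an ortho-set `A`: the points whose total
similarity to `A` equals `1`. -/
def SpanOf (s : Ω → Ω → ℝ) (A : Set Ω) : Set Ω :=
  {x : Ω | (∑' y : A, s x (y : Ω)) = 1}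

/-- A subspace is a set of the form `SpanOf s A` for an ortho-set `A` (a basis). -/
def IsSubspace (s : Ω → Ω → ℝ) (B : Set Ω) : Prop :=
  ∃ A : Set Ω, OrthoSet s A ∧ B = SpanOf s A

/-- Orthogonal complement of a subset. -/
def Perp (s : Ω → Ω → ℝ) (A : Set Ω) : Set Ω :=
  {x : Ω | ∀ y ∈ A, s x y = 0}

/-- The sum of two subsets: the smallest subspace including their union. -/
def Oplus (s : Ω → Ω → ℝ) (A B : Set Ω) : Set Ω :=
  ⋂₀ {X : Set Ω | IsSubspace s X ∧ A ∪ B ⊆ X}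

open scoped Classical

/-- `x` is orthogonal to the set `A`. -/
def PerpPt (s : Ω → Ω → ℝ) (x : Ω) (A : Set Ω) : Prop :=
  ∀ y ∈ A, s x y = 0

/-- Similarity of the subspaces `A` and `B` from the vantage point `x`,
given the projection map `t` and the point-to-subspace similarity `sP`. -/
noncomputable def tauSim (s : Ω → Ω → ℝ) (t : Ω → Set Ω → Ω) (sP : Ω → Set Ω → ℝ)
    (x : Ω) (A B : Set Ω) : ℝ :=
  if PerpPt s x A then 1 - sP x B
  else if PerpPt s x B then 1 - sP x A
  else s (t x A) (t x B)

/-- Similarity of two subspaces: the infimum over all vantage points. -/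
noncomputable def simSub (s : Ω → Ω → ℝ) (t : Ω → Set Ω → Ω) (sP : Ω → Set Ω → ℝ)
    (A B : Set Ω) : ℝ :=
  sInf (Set.range fun x : Ω => tauSim s t sP x A B)


/-- The point-level axioms used in the proof. -/
structure SPHyp (s : Ω → Ω → ℝ) (t : Ω → Set Ω → Ω) : Prop where
  val0 : ∀ x y : Ω, 0 ≤ s x y
  val1 : ∀ x y : Ω, s x y ≤ 1
  eq1 : ∀ x y : Ω, s x y = 1 ↔ x = y
  sym : ∀ x y : Ω, s x y = s y x
  cont : ∀ x y z : Ω, s z x ≤ s z y + 1 / 2 * Real.sqrt (1 - s x y) + (1 - s x y)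
  mem : ∀ (x : Ω) (A : Set Ω), IsSubspace s A → ¬ PerpPt s x A → t x A ∈ A
  fact : ∀ (x : Ω) (A : Set Ω), IsSubspace s A → ¬ PerpPt s x A →
      ∀ y ∈ A, s x y = s x (t x A) * s (t x A) y
  bound2 : ∀ x y z : Ω, s y z = 0 → s x y + s x z ≤ 1

namespace SPHyp

variable {s : Ω → Ω → ℝ} {t : Ω → Set Ω → Ω}

theorem self (H : SPHyp s t) (x : Ω) : s x x = 1 := (H.eq1 x x).2 rfl

theorem t_pos (H : SPHyp s t) {x : Ω} {A : Set Ω} (hA : IsSubspace s A)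
    (h : ¬ PerpPt s x A) : 0 < s x (t x A) := by
  refine lt_of_le_of_ne (H.val0 _ _) ?_
  intro h0
  apply h
  intro y hy
  rw [H.fact x A hA h y hy, ← h0, zero_mul]

theorem t_self (H : SPHyp s t) {x : Ω} {A : Set Ω} (hA : IsSubspace s A)
    (hx : x ∈ A) : t x A = x := by
  have hn : ¬ PerpPt s x A := fun h => by
    have := h x hx
    rw [H.self] at this
    norm_num at this
  have h1 := H.fact x A hA hn x hx
  rw [H.self, H.sym (t x A) x] at h1
  have h0 := H.val0 x (t x A)
  have h2 := H.val1 x (t x A)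
  have h3 : s x (t x A) = 1 := by nlinarith
  exact ((H.eq1 _ _).1 h3).symm

theorem basis_sub (H : SPHyp s t) {β : Set Ω} (hβ : OrthoSet s β) : β ⊆ SpanOf s β := by
  intro y hy
  show (∑' z : β, s y (z : Ω)) = 1
  rw [tsum_eq_single (⟨y, hy⟩ : β), H.self]
  intro z hz
  exact hβ y hy z z.2 (fun h => hz (Subtype.ext h.symm))

theorem perp_span (H : SPHyp s t) {β : Set Ω} (hβ : OrthoSet s β) {x : Ω}
    (hx : ∀ y ∈ β, s x y = 0) : PerpPt s x (SpanOf s β) := by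
  by_contra h
  have hS : IsSubspace s (SpanOf s β) := ⟨β, hβ, rfl⟩
  have hm : (∑' z : β, s (t x (SpanOf s β)) (z : Ω)) = 1 := H.mem x _ hS h
  have hp := H.t_pos hS h
  have : ∀ z : β, s (t x (SpanOf s β)) (z : Ω) = 0 := by
    intro z
    have h1 := H.fact x _ hS h z (H.basis_sub hβ z.2)
    rw [hx z z.2] at h1
    rcases mul_eq_zero.1 h1.symm with h2 | h2
    · exact absurd h2 hp.ne'
    · exact h2
  simp [this] at hm

theorem ortho_pair (H : SPHyp s t) {z x : Ω} (h : s z x = 0) : OrthoSet s ({z, x} : Set Ω) := by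
  rintro p (rfl | rfl) q (rfl | rfl) hpq
  · exact absurd rfl hpq
  · exact h
  · rw [H.sym]; exact h
  · exact absurd rfl hpq

theorem sub_pair (H : SPHyp s t) {z x : Ω} (h : s z x = 0) :
    IsSubspace s (SpanOf s ({z, x} : Set Ω)) := ⟨_, H.ortho_pair h, rfl⟩

theorem mem_pair (H : SPHyp s t) {z x : Ω} (h : s z x = 0) (p : Ω) :
    p ∈ SpanOf s ({z, x} : Set Ω) ↔ s p z + s p x = 1 := by
  have hne : z ≠ x := fun e => by
    rw [e, H.self] at h
    norm_num at h
  have : (∑' y : ({z, x} : Set Ω), s p (y : Ω)) = s p z + s p x := by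
    have h1 := Finset.tsum_subtype' ({z, x} : Finset Ω) (s p)
    rw [Finset.sum_pair hne] at h1
    have hc : (({z, x} : Finset Ω) : Set Ω) = {z, x} := by simp
    rw [← hc]
    exact h1
  show (∑' y : ({z, x} : Set Ω), s p (y : Ω)) = 1 ↔ _
  rw [this]

theorem left_mem (H : SPHyp s t) {z x : Ω} (h : s z x = 0) :
    z ∈ SpanOf s ({z, x} : Set Ω) := by rw [H.mem_pair h, H.self, h]; norm_num

theorem right_mem (H : SPHyp s t) {z x : Ω} (h : s z x = 0) :
    x ∈ SpanOf s ({z, x} : Set Ω) := by rw [H.mem_pair h, H.self, H.sym, h]; norm_num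

/-- A point orthogonal to `x` projects to `z` in the span of `z, x`. -/
theorem pair_fact (H : SPHyp s t) {z x : Ω} (h : s z x = 0) {q p : Ω} (hq : s q x = 0)
    (hp : p ∈ SpanOf s ({z, x} : Set Ω)) : s q p = s q z * s z p := by
  by_cases hP : PerpPt s q (SpanOf s ({z, x} : Set Ω))
  · rw [hP p hp, hP z (H.left_mem h), zero_mul]
  · have hS := H.sub_pair h
    have h1 := H.fact q _ hS hP x (H.right_mem h)
    rw [hq] at h1
    have h2 : s (t q (SpanOf s ({z, x} : Set Ω))) x = 0 := by
      rcases mul_eq_zero.1 h1.symm with h2 | h2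
      · exact absurd h2 (H.t_pos hS hP).ne'
      · exact h2
    have h3 := (H.mem_pair h _).1 (H.mem q _ hS hP)
    have h4 : t q (SpanOf s ({z, x} : Set Ω)) = z := (H.eq1 _ _).1 (by linarith)
    have h5 := H.fact q _ hS hP p hp
    rwa [h4] at h5

/-- Projection from the span of `z, x` to the span of `z', x`. -/
theorem step (H : SPHyp s t) {z z' x p : Ω} (hz : s z x = 0) (hz' : s z' x = 0)
    (hp : p ∈ SpanOf s ({z, x} : Set Ω)) (ha : 0 < s p x) :
    t p (SpanOf s ({z', x} : Set Ω)) ∈ SpanOf s ({z', x} : Set Ω) ∧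
    (∀ v ∈ SpanOf s ({z', x} : Set Ω), s p v =
      ((1 - s p x) * s z z' + s p x) * s (t p (SpanOf s ({z', x} : Set Ω))) v) ∧
    s p (t p (SpanOf s ({z', x} : Set Ω))) = (1 - s p x) * s z z' + s p x := by
  have hn : ¬ PerpPt s p (SpanOf s ({z', x} : Set Ω)) := fun hP =>
    ha.ne' (hP x (H.right_mem hz'))
  have hS := H.sub_pair hz'
  have hm := H.mem p _ hS hn
  have hf := H.fact p _ hS hn
  have h1 := hf z' (H.left_mem hz')
  have h2 := hf x (H.right_mem hz')
  have h3 := (H.mem_pair hz' _).1 hm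
  have h4 := H.pair_fact hz hz' hp
  have h5 := (H.mem_pair hz p).1 hp
  have h6 : s p (t p (SpanOf s ({z', x} : Set Ω))) = (1 - s p x) * s z z' + s p x := by
    rw [H.sym z' p, H.sym z' z, H.sym z p] at h4
    have : s p z = 1 - s p x := by linarith
    rw [this] at h4
    calc s p (t p (SpanOf s ({z', x} : Set Ω)))
        = s p (t p (SpanOf s ({z', x} : Set Ω))) *
          (s (t p (SpanOf s ({z', x} : Set Ω))) z' + s (t p (SpanOf s ({z', x} : Set Ω))) x) := by
            rw [h3, mul_one]
      _ = s p z' + s p x := by rw [mul_add, ← h1, ← h2]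
      _ = _ := by rw [h4]; ring
  refine ⟨hm, ?_, h6⟩
  intro v hv
  rw [← h6]
  exact hf v hv

/-- Double projection. -/
noncomputable def dbl (s : Ω → Ω → ℝ) (t : Ω → Set Ω → Ω) (z z' x p : Ω) : Ω :=
  t (t p (SpanOf s ({z', x} : Set Ω))) (SpanOf s ({z, x} : Set Ω))

theorem dbl_spec (H : SPHyp s t) {z z' x p : Ω} (hz : s z x = 0) (hz' : s z' x = 0)
    (hp : p ∈ SpanOf s ({z, x} : Set Ω)) (ha : 0 < s p x) :
    dbl s t z z' x p ∈ SpanOf s ({z, x} : Set Ω) ∧ 0 < s (dbl s t z z' x p) x ∧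
    ((1 - s p x) * s z z' ^ 2 + s p x) * s (dbl s t z z' x p) x = s p x ∧
    ∀ q ∈ SpanOf s ({z, x} : Set Ω), 0 < s q x →
      ((1 - s p x) * s z z' ^ 2 + s p x) * s (dbl s t z z' x p) q =
      ((1 - s p x) * s z z' + s p x) * (((1 - s q x) * s z z' + s q x) *
        s (t p (SpanOf s ({z', x} : Set Ω))) (t q (SpanOf s ({z', x} : Set Ω)))) := by
  obtain ⟨h1, h2, -⟩ := H.step hz hz' hp ha
  have h3 := h2 x (H.right_mem hz')
  set p' := t p (SpanOf s ({z', x} : Set Ω)) with hp'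
  have hk := H.val0 z z'
  have ha1 := H.val1 p x
  have hν : 0 < (1 - s p x) * s z z' + s p x := by nlinarith
  have ha' : 0 < s p' x := by
    refine lt_of_le_of_ne (H.val0 _ _) fun h0 => ?_
    rw [← h0, mul_zero] at h3
    exact ha.ne' h3
  obtain ⟨g1, g2, -⟩ := H.step hz' hz h1 ha'
  have g3 := g2 x (H.right_mem hz)
  have hd : dbl s t z z' x p = t p' (SpanOf s ({z, x} : Set Ω)) := rfl
  rw [← hd] at g1 g2 g3
  rw [H.sym z' z] at g2 g3
  have hN : (1 - s p x) * s z z' ^ 2 + s p x =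
      ((1 - s p x) * s z z' + s p x) * ((1 - s p' x) * s z z' + s p' x) := by
    linear_combination (1 - s z z') * h3
  refine ⟨g1, ?_, ?_, ?_⟩
  · refine lt_of_le_of_ne (H.val0 _ _) fun h0 => ?_
    rw [← h0, mul_zero] at g3
    exact ha'.ne' g3
  · rw [hN, mul_assoc, ← g3, ← h3]
  · intro q hq hqa
    obtain ⟨-, q2, -⟩ := H.step hz hz' hq hqa
    have q3 := q2 p' h1
    rw [hN, mul_assoc, ← g2 q hq, H.sym p' q, q3, H.sym p' _]

/-- The normalised similarity. -/
noncomputable def nsim (s : Ω → Ω → ℝ) (x p q : Ω) : ℝ := s p q / (s p x * s q x)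

theorem nsim_dbl (H : SPHyp s t) {z z' x p q : Ω} (hz : s z x = 0) (hz' : s z' x = 0)
    (hp : p ∈ SpanOf s ({z, x} : Set Ω)) (ha : 0 < s p x)
    (hq : q ∈ SpanOf s ({z, x} : Set Ω)) (hb : 0 < s q x) :
    nsim s x (dbl s t z z' x p) q = nsim s x p (dbl s t z z' x q) := by
  obtain ⟨-, p2, p3, p4⟩ := H.dbl_spec hz hz' hp ha
  obtain ⟨-, q2, q3, q4⟩ := H.dbl_spec hz hz' hq hb
  have e1 := p4 q hq hb
  have e2 := q4 p hp ha
  rw [H.sym (t q _) (t p _)] at e2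
  have e3 := H.sym (dbl s t z z' x q) p
  rw [e3] at e2
  unfold nsim
  set u := s (dbl s t z z' x p) q
  set v := s p (dbl s t z z' x q)
  set a1 := s (dbl s t z z' x p) x
  set b1 := s (dbl s t z z' x q) x
  set Np := (1 - s p x) * s z z' ^ 2 + s p x
  set Nq := (1 - s q x) * s z z' ^ 2 + s q x
  have hNp : 0 < Np := by
    rcases lt_or_ge 0 Np with h | h
    · exact h
    · nlinarith
  have hNq : 0 < Nq := by
    rcases lt_or_ge 0 Nq with h | h
    · exact h
    · nlinarith
  have e4 : Np * u = Nq * v := by rw [e1, e2]; ring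
  rw [div_eq_div_iff (by positivity) (by positivity), ← p3, ← q3]
  linear_combination a1 * b1 * e4

theorem dbl_odds (H : SPHyp s t) {z z' x p : Ω} (hz : s z x = 0) (hz' : s z' x = 0)
    (hp : p ∈ SpanOf s ({z, x} : Set Ω)) (ha : 0 < s p x) :
    1 / s (dbl s t z z' x p) x = 1 + (1 / s p x - 1) * s z z' ^ 2 := by
  obtain ⟨-, p2, p3, -⟩ := H.dbl_spec hz hz' hp ha
  field_simp
  linear_combination -p3

theorem iter_spec (H : SPHyp s t) {z z' x p : Ω} (hz : s z x = 0) (hz' : s z' x = 0)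
    (hp : p ∈ SpanOf s ({z, x} : Set Ω)) (ha : 0 < s p x) (n : ℕ) :
    (dbl s t z z' x)^[n] p ∈ SpanOf s ({z, x} : Set Ω) ∧ 0 < s ((dbl s t z z' x)^[n] p) x ∧
    1 / s ((dbl s t z z' x)^[n] p) x = 1 + (1 / s p x - 1) * (s z z' ^ 2) ^ n := by
  induction n with
  | zero => simp [hp, ha]
  | succ n ih =>
    rw [Function.iterate_succ_apply']
    obtain ⟨i1, i2, i3⟩ := ih
    obtain ⟨d1, d2, -⟩ := H.dbl_spec hz hz' i1 i2
    refine ⟨d1, d2, ?_⟩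
    rw [H.dbl_odds hz hz' i1 i2, i3]
    ring

theorem nsim_iter (H : SPHyp s t) {z z' x : Ω} (hz : s z x = 0) (hz' : s z' x = 0) (n : ℕ) :
    ∀ p q : Ω, p ∈ SpanOf s ({z, x} : Set Ω) → 0 < s p x →
      q ∈ SpanOf s ({z, x} : Set Ω) → 0 < s q x →
      nsim s x ((dbl s t z z' x)^[n] p) q = nsim s x p ((dbl s t z z' x)^[n] q) := by
  induction n with
  | zero => intros; rfl
  | succ n ih =>
    intro p q hp ha hq hb
    rw [Function.iterate_succ_apply, Function.iterate_succ_apply']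
    obtain ⟨d1, d2, -⟩ := H.dbl_spec hz hz' hp ha
    obtain ⟨i1, i2, -⟩ := H.iter_spec hz hz' hq hb n
    rw [ih _ _ d1 d2 hq hb, H.nsim_dbl hz hz' hp ha i1 i2]

theorem num_ineq (w e : ℝ) (hw : 1 / 2 ≤ w) (hw1 : w ≤ 1) (he : 0 < e) (he1 : e ≤ 1 / 100) :
    (1 + w ^ 2 * e ^ 2) * (1 + (1 + w ^ 2) * (1 / 2 * (w * e) + w ^ 2 * e ^ 2))
      < (1 + w ^ 2 * e) ^ 2 := by
  have hw2 : w ^ 2 ≤ 1 := by nlinarith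
  have h1 : (1 + w ^ 2) * (1 / 2 * (w * e) + w ^ 2 * e ^ 2) ≤ 1 := by
    have : 1 / 2 * (w * e) + w ^ 2 * e ^ 2 ≤ 1 / 2 := by nlinarith [mul_nonneg (by linarith : (0:ℝ) ≤ w) he.le]
    have h0 : 0 ≤ 1 / 2 * (w * e) + w ^ 2 * e ^ 2 := by positivity
    nlinarith
  have h2 : (1 + w ^ 2 * e ^ 2) * (1 + (1 + w ^ 2) * (1 / 2 * (w * e) + w ^ 2 * e ^ 2))
      ≤ 1 + (1 + w ^ 2) * (1 / 2 * (w * e)) + 4 * e ^ 2 := by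
    have a1 : w ^ 2 * e ^ 2 ≤ e ^ 2 := by nlinarith [sq_nonneg e]
    have a0 : 0 ≤ w ^ 2 * e ^ 2 := by positivity
    have a2 : w ^ 2 * e ^ 2 * ((1 + w ^ 2) * (1 / 2 * (w * e) + w ^ 2 * e ^ 2)) ≤ w ^ 2 * e ^ 2 :=
      mul_le_of_le_one_right a0 h1
    have a3 : (1 + w ^ 2) * (w ^ 2 * e ^ 2) ≤ 2 * (w ^ 2 * e ^ 2) := by nlinarith
    nlinarith
  have h3 : 3 / 16 ≤ 2 * w ^ 2 - (1 + w ^ 2) * (1 / 2 * w) := by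
    nlinarith [mul_nonneg (by linarith : (0:ℝ) ≤ w - 1 / 2) (by linarith : (0:ℝ) ≤ 1 - w)]
  have h4 : 3 / 16 * e ≤ (2 * w ^ 2 - (1 + w ^ 2) * (1 / 2 * w)) * e :=
    mul_le_mul_of_nonneg_right h3 he.le
  have h5 : 0 ≤ (w ^ 2 * e) ^ 2 := by positivity
  nlinarith

/-- Points with comparable weights on `z` and `x` contradict continuity. -/
theorem key0 (H : SPHyp s t) {z z' x p : Ω} (hz : s z x = 0) (hz' : s z' x = 0)
    (hp : p ∈ SpanOf s ({z, x} : Set Ω)) (ha : 0 < s p x)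
    (hk : 1 / 2 ≤ s z z') (hk1 : s z z' < 1) (ho : 1 / 4 ≤ 1 / s p x - 1)
    (ho1 : 1 / s p x - 1 ≤ 1) : False := by
  have hkk : s z z' ^ 2 < 1 := by nlinarith
  obtain ⟨n, hn⟩ := exists_pow_lt_of_lt_one (show (0:ℝ) < 1 / 100 by norm_num) hkk
  obtain ⟨i1, i2, i3⟩ := H.iter_spec hz hz' hp ha n
  obtain ⟨j1, j2, j3⟩ := H.iter_spec hz hz' i1 i2 n
  have hM := H.nsim_iter hz hz' n p _ hp ha i1 i2
  set P := (dbl s t z z' x)^[n] p with hP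
  set Q := (dbl s t z z' x)^[n] P with hQ
  set e := (s z z' ^ 2) ^ n with hedef
  have he : 0 < e := by positivity
  set o := 1 / s p x - 1 with hodef
  have hc := H.cont Q x p
  have hpx : s p x = 1 / (1 + o) := by rw [hodef]; field_simp; ring
  have hPx : s P x = 1 / (1 + o * e) := by rw [← i3]; field_simp
  have hQx : s Q x = 1 / (1 + o * e ^ 2) := by
    rw [i3] at j3
    have : 1 + o * e ^ 2 = 1 / s Q x := by rw [j3]; ring
    rw [this]; field_simp
  unfold nsim at hM
  rw [H.self, hPx, hQx, hpx] at hM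
  have ho0 : 0 < o := by linarith
  have hpQ : s p Q = (1 + o * e) ^ 2 / ((1 + o) * (1 + o * e ^ 2)) := by
    field_simp at hM ⊢
    linarith
  rw [hpQ, hQx, hpx] at hc
  set w := Real.sqrt o with hw
  have hw2 : w ^ 2 = o := Real.sq_sqrt ho0.le
  have hw0 : 0 ≤ w := Real.sqrt_nonneg _
  have hwa : 1 / 2 ≤ w := by nlinarith
  have hwb : w ≤ 1 := by nlinarith
  have hni := num_ineq w e hwa hwb he hn.le
  rw [hw2] at hni
  have hle : 1 - 1 / (1 + o * e ^ 2) ≤ o * e ^ 2 := by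
    have : 0 ≤ o * e ^ 2 := by positivity
    rw [sub_le_iff_le_add, ← sub_le_iff_le_add', le_div_iff₀ (by positivity)]
    nlinarith
  have hsq : Real.sqrt (1 - 1 / (1 + o * e ^ 2)) ≤ w * e := by
    apply Real.sqrt_le_iff.2
    refine ⟨by positivity, ?_⟩
    rw [mul_pow, hw2]; exact hle
  have hfin : (1 + o * e) ^ 2 / ((1 + o) * (1 + o * e ^ 2)) ≤
      1 / (1 + o) + (1 / 2 * (w * e) + o * e ^ 2) := by linarith
  rw [div_le_iff₀ (by positivity)] at hfin
  have : (1 / (1 + o) + (1 / 2 * (w * e) + o * e ^ 2)) * ((1 + o) * (1 + o * e ^ 2)) =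
    (1 + o * e ^ 2) * (1 + (1 + o) * (1 / 2 * (w * e) + o * e ^ 2)) := by
    field_simp
  rw [this] at hfin
  linarith

theorem key (H : SPHyp s t) {z z' x p : Ω} (hz : s z x = 0) (hz' : s z' x = 0)
    (hp : p ∈ SpanOf s ({z, x} : Set Ω)) (ha : 0 < s p x)
    (hk : 1 / 2 ≤ s z z') (hk1 : s z z' < 1) (ho : 1 / 4 ≤ 1 / s p x - 1) : False := by
  rcases le_or_gt (1 / s p x - 1) 1 with h | h
  · exact H.key0 hz hz' hp ha hk hk1 ho h
  · have hkk : s z z' ^ 2 < 1 := by nlinarith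
    have hkk' : 1 / 4 ≤ s z z' ^ 2 := by nlinarith
    set o := 1 / s p x - 1 with hodef
    have ho0 : 0 < o := by linarith
    obtain ⟨n, h1, h2⟩ := exists_nat_pow_near_of_lt_one (x := 1 / o) (y := s z z' ^ 2)
      (by positivity) (by rw [div_le_one ho0]; exact h.le) (by linarith) hkk
    obtain ⟨i1, i2, i3⟩ := H.iter_spec hz hz' hp ha (n + 1)
    rw [lt_div_iff₀ ho0] at h1
    rw [div_le_iff₀ ho0] at h2
    refine H.key0 hz hz' i1 i2 hk hk1 ?_ ?_
    · rw [i3, pow_succ]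
      nlinarith
    · rw [i3]; linarith

/-- If `z` carries a point of the span of `z, x` then `z` lies in every basis. -/
theorem basis_mem (H : SPHyp s t) {β : Set Ω} (hβ : OrthoSet s β) {z x p : Ω}
    (hx : ∀ y ∈ β, s x y = 0) (hzβ : z ∈ SpanOf s β)
    (hp : p ∈ SpanOf s ({z, x} : Set Ω)) (ha : 0 < s p x) (ho : 1 / 4 ≤ 1 / s p x - 1) :
    z ∈ β := by
  by_contra hz
  have hsum : (∑' y : β, s z (y : Ω)) = 1 := hzβ
  have hne1 : ∀ y ∈ β, s z y ≠ 1 := fun y hy h => hz (by rw [(H.eq1 z y).1 h]; exact hy)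
  have hi : ∃ i ∈ β, s z i ≠ 0 ∧ s z i ≤ 1 / 2 := by
    have h0 : ∃ i : β, s z i ≠ 0 := by
      by_contra! h
      simp [h] at hsum
    obtain ⟨i, hi⟩ := h0
    have h1 : ∃ j : β, j ≠ i ∧ s z j ≠ 0 := by
      by_contra! h
      rw [tsum_eq_single i h] at hsum
      exact hne1 i i.2 hsum
    obtain ⟨j, hji, hj⟩ := h1
    have h2 := H.bound2 z i j (hβ i i.2 j j.2 (fun h => hji (Subtype.ext h.symm)))
    rcases le_or_gt (s z i) (1 / 2) with h | h
    · exact ⟨i, i.2, hi, h⟩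
    · exact ⟨j, j.2, hj, by linarith⟩
  obtain ⟨i, hiβ, hi0, hi2⟩ := hi
  have hβ' : OrthoSet s (β \ {i}) := fun a ha b hb => hβ a ha.1 b hb.1
  have hsummable : Summable (fun y : β => s z (y : Ω)) := by
    by_contra h
    rw [tsum_eq_zero_of_not_summable h] at hsum
    norm_num at hsum
  have hsummable2 : Summable (β.indicator (s z)) := summable_subtype_iff_indicator.1 hsummable
  have hsplit : (∑' y : (β \ {i} : Set Ω), s z (y : Ω)) = 1 - s z i := by
    have e1 := hsummable2.tsum_eq_add_tsum_ite i
    rw [← tsum_subtype, hsum, Set.indicator_of_mem hiβ] at e1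
    rw [tsum_subtype, e1, add_sub_cancel_left]
    congr 1
    funext y
    by_cases hy : y = i
    · simp [hy]
    · by_cases hyb : y ∈ β <;> simp [hy, hyb]
  have hD : IsSubspace s (SpanOf s (β \ {i})) := ⟨_, hβ', rfl⟩
  have hsub := H.basis_sub hβ'
  have hn : ¬ PerpPt s z (SpanOf s (β \ {i})) := by
    intro hP
    have : ∀ y : (β \ {i} : Set Ω), s z (y : Ω) = 0 := fun y => hP y (hsub y.2)
    simp [this] at hsplit
    linarith
  have hm : (∑' y : (β \ {i} : Set Ω), s (t z (SpanOf s (β \ {i}))) (y : Ω)) = 1 :=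
    H.mem z _ hD hn
  have hk : s z (t z (SpanOf s (β \ {i}))) = 1 - s z i := by
    rw [← hsplit]
    have : ∀ y : (β \ {i} : Set Ω), s z (y : Ω) =
        s z (t z (SpanOf s (β \ {i}))) * s (t z (SpanOf s (β \ {i}))) y := fun y =>
      H.fact z _ hD hn y (hsub y.2)
    rw [tsum_congr this, tsum_mul_left, hm, mul_one]
  have hxz : s z x = 0 := by
    rw [H.sym]; exact H.perp_span hβ hx z hzβ
  have hxz' : s (t z (SpanOf s (β \ {i}))) x = 0 := by
    rw [H.sym]
    exact H.perp_span hβ' (fun y hy => hx y hy.1) _ (H.mem z _ hD hn)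
  have hpos : 0 < s z i := lt_of_le_of_ne (H.val0 _ _) (Ne.symm hi0)
  exact H.key hxz hxz' hp ha (by rw [hk]; linarith) (by rw [hk]; linarith) ho

theorem num2 (q k l : ℝ) (hq : 0 < q) (hq1 : 1 / 2 * q + q ^ 2 < 1)
    (hk : 1 / 2 * q + q ^ 2 < k) (hl : 1 - q ^ 2 ≤ l) (g : ℝ) (hg0 : 0 < g) (hg : g * (1 - q ^ 2) ≤ l * q ^ 2)
    (hlg : l + g = 1) : g ≤ q ^ 2 ∧ 1 / 4 * g ≤ l * k := by
  have hgq : g ≤ q ^ 2 := by nlinarith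
  have hqq : q < 4 / 5 := by nlinarith
  refine ⟨hgq, ?_⟩
  have h1 : 1 / 4 * q ^ 2 ≤ (1 - q ^ 2) * (1 / 2 * q + q ^ 2) := by
    have : 0 ≤ q * (1 / 2 + 3 / 4 * q - 1 / 2 * q ^ 2 - q ^ 3) := by
      apply mul_nonneg hq.le
      have : q ^ 2 < 4 / 5 * q := by nlinarith
      have : q ^ 3 < 16 / 25 * q := by nlinarith
      nlinarith
    nlinarith
  have h2 : (1 - q ^ 2) * (1 / 2 * q + q ^ 2) ≤ l * k := by
    apply mul_le_mul hl hk.le (by positivity)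
    nlinarith
  linarith

theorem main4 (H : SPHyp s t) {A B C : Set Ω} (hA : IsSubspace s A) (hB : IsSubspace s B)
    (hC : IsSubspace s C) {x : Ω} (hxB : PerpPt s x B) (hxA : ¬ PerpPt s x A)
    (hxC : ¬ PerpPt s x C) (S u : ℝ)
    (hS : ∀ v, ¬ PerpPt s v A → ¬ PerpPt s v B → S ≤ s (t v A) (t v B))
    (hS2 : ∀ v, PerpPt s v A → ¬ PerpPt s v B → S ≤ 1 - s v (t v B))
    (hS3 : ∀ v, PerpPt s v B → ¬ PerpPt s v A → S ≤ 1 - s v (t v A))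
    (hU : ∀ v, ¬ PerpPt s v B → ¬ PerpPt s v C → 1 - u ≤ s (t v B) (t v C))
    (hU2 : ∀ v, PerpPt s v B → ¬ PerpPt s v C → 1 - u ≤ 1 - s v (t v C)) :
    S ≤ s (t x A) (t x C) + 1 / 2 * Real.sqrt u + u := by
  by_contra hcon
  push Not at hcon
  have hαpos := H.t_pos hA hxA
  have hγpos := H.t_pos hC hxC
  have haA := H.mem x A hA hxA
  have hcC := H.mem x C hC hxC
  have hfa := H.fact x A hA hxA
  have hγu := hU2 x hxB hxC
  have hSle := hS3 x hxB hxA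
  set a := t x A with ha
  set c := t x C with hc
  have hr := H.val0 a c
  have hu0 : 0 < u := by linarith
  set q := Real.sqrt u with hqdef
  have hq : 0 < q := Real.sqrt_pos.2 hu0
  have hqu : q ^ 2 = u := Real.sq_sqrt hu0.le
  have hSpos : 0 < S := by linarith
  have hq1 : 1 / 2 * q + q ^ 2 < 1 := by linarith
  have nperp : ∀ {v : Ω} {D : Set Ω}, v ∈ D → ¬ PerpPt s v D := fun {v D} hv hP => by
    have := hP v hv
    rw [H.self] at this
    norm_num at this
  have hcnC : ¬ PerpPt s c C := nperp hcC
  have htc : t c C = c := H.t_self hC hcC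
  have hcB : ¬ PerpPt s c B := by
    intro hP
    have := hU2 c hP hcnC
    rw [htc, H.self] at this
    nlinarith
  have hbB := H.mem c B hB hcB
  have hcb := hU c hcB hcnC
  rw [htc] at hcb
  set b := t c B with hb
  have hbx : s b x = 0 := by rw [H.sym]; exact hxB b hbB
  have hcb0 : 0 < s b c := by nlinarith
  -- the point w
  have hSP := H.sub_pair hbx
  have hcP : ¬ PerpPt s c (SpanOf s ({b, x} : Set Ω)) := fun hP => by
    have := hP x (H.right_mem hbx)
    rw [H.sym] at this
    exact hγpos.ne' this
  have hw := H.mem c _ hSP hcP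
  have hfw := H.fact c _ hSP hcP
  set w := t c (SpanOf s ({b, x} : Set Ω)) with hwdef
  have hw1 := (H.mem_pair hbx w).1 hw
  have hwb := hfw b (H.left_mem hbx)
  have hwx := hfw x (H.right_mem hbx)
  rw [H.sym c b] at hwb
  rw [H.sym c x] at hwx
  have hcw0 := H.val0 c w
  have hwx0 : 0 < s w x := by
    refine lt_of_le_of_ne (H.val0 _ _) fun h0 => ?_
    rw [← h0, mul_zero] at hwx
    exact hγpos.ne' hwx
  have hcwpos : 0 < s c w := by
    refine lt_of_le_of_ne (H.val0 _ _) fun h0 => ?_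
    rw [← h0, zero_mul] at hwx
    exact hγpos.ne' hwx
  have hodd : s w x * (1 - q ^ 2) ≤ s w b * q ^ 2 := by
    have h1 : s x c * (1 - q ^ 2) ≤ s b c * q ^ 2 := by
      have h2 : s x c ≤ q ^ 2 := by linarith
      have h3 : 1 - q ^ 2 ≤ s b c := by linarith
      have h4 : 0 ≤ 1 - q ^ 2 := by nlinarith
      nlinarith [mul_le_mul h2 h3 h4 (by positivity)]
    rw [hwb, hwx] at h1
    by_contra hlt
    push Not at hlt
    nlinarith [mul_lt_mul_of_pos_left hlt hcwpos]
  have hlw : 1 - q ^ 2 ≤ s w b := by nlinarith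
  have hlw0 : 0 < s w b := by nlinarith
  have hgq : s w x ≤ q ^ 2 := by linarith
  -- formula for w on B
  have hwB : ∀ y ∈ B, s w y = s w b * s b y := by
    intro y hy
    have := H.pair_fact hbx (q := y) (by rw [H.sym]; exact hxB y hy) hw
    rw [H.sym w y, this, H.sym y b, H.sym b w, mul_comm]
  have hwnB : ¬ PerpPt s w B := fun hP => hlw0.ne' (hP b hbB)
  have htw : t w B = b := by
    have h1 := H.fact w B hB hwnB b hbB
    have h2 := hwB _ (H.mem w B hB hwnB)
    rw [h2, H.sym (t w B) b] at h1
    have h3 : s b (t w B) * s b (t w B) = 1 := by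
      have : s w b * (s b (t w B) * s b (t w B)) = s w b * 1 := by linarith
      exact mul_left_cancel₀ hlw0.ne' this
    have h4 : s b (t w B) = 1 := by nlinarith [H.val0 b (t w B), H.val1 b (t w B)]
    exact ((H.eq1 _ _).1 h4).symm
  have htb : t b B = b := H.t_self hB hbB
  have hbnB : ¬ PerpPt s b B := nperp hbB
  obtain ⟨β, hβ, hBβ⟩ := hB
  have hB : IsSubspace s B := ⟨β, hβ, hBβ⟩
  have hββ : β ⊆ B := by rw [hBβ]; exact H.basis_sub hβ
  have hxβ : ∀ y ∈ β, s x y = 0 := fun y hy => hxB y (hββ hy)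
  have hnum := fun k hk => num2 q k (s w b) hq hq1 hk hlw (s w x) hwx0 hodd hw1
  have hbβ : b ∈ β := by
    refine H.basis_mem hβ hxβ (hBβ ▸ hbB) hw hwx0 ?_
    have := (hnum 1 hq1).2
    rw [le_sub_iff_add_le, le_div_iff₀ hwx0]
    linarith
  -- points over b keep lying over b after projection to A
  have hover : ∀ v, ¬ PerpPt s v A → ¬ PerpPt s v B → t v B = b →
      ∀ y ∈ B, s (t v A) y = s (t v A) b * s b y := by
    intro v hvA hvB hvb
    have h1 := hS v hvA hvB
    rw [hvb] at h1
    have hn : ¬ PerpPt s (t v A) B := fun hP => by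
      rw [hP b hbB] at h1
      linarith
    have hyB := H.mem _ B hB hn
    have hf := H.fact _ B hB hn
    set y := t (t v A) B with hy
    have h2 := hf b hbB
    have hkS : S ≤ s y b := by
      have := H.val1 (t v A) y
      have := H.val0 y b
      nlinarith
    have hyx : s y x = 0 := by rw [H.sym]; exact hxB y hyB
    have hk : 1 / 2 * q + q ^ 2 < s b y := by rw [H.sym b y]; linarith
    have hyβ : y ∈ β := by
      obtain ⟨e1, e2, e3⟩ := H.step hbx hyx hw hwx0
      have e4 := e2 x (H.right_mem hyx)
      have hν : 0 < (1 - s w x) * s b y + s w x := by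
        have : 0 ≤ (1 - s w x) * s b y :=
          mul_nonneg (by linarith) (H.val0 _ _)
        linarith
      have hpx : 0 < s (t w (SpanOf s ({y, x} : Set Ω))) x := by
        refine lt_of_le_of_ne (H.val0 _ _) fun h0 => ?_
        rw [← h0, mul_zero] at e4
        exact hwx0.ne' e4
      refine H.basis_mem hβ hxβ (hBβ ▸ hyB) e1 hpx ?_
      have h5 := (hnum _ hk).2
      rw [le_sub_iff_add_le, le_div_iff₀ hpx]
      have h6 : s w b = 1 - s w x := by linarith
      rw [h6] at h5
      by_contra hlt
      push Not at hlt
      nlinarith [mul_lt_mul_of_pos_right hlt hν]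
    have hyb : y = b := by
      by_contra hne
      have := hβ y hyβ b hbβ hne
      linarith
    intro z hz
    rw [hyb] at hf
    exact hf z hz
  -- the projection of a to B
  have hanA : ¬ PerpPt s a A := nperp haA
  have hta : t a A = a := H.t_self hA haA
  have hanB : ¬ PerpPt s a B := by
    intro hP
    have := hS3 a hP hanA
    rw [hta, H.self] at this
    linarith
  have hSa := hS a hanA hanB
  rw [hta] at hSa
  have hdB := H.mem a B hB hanB
  have hfd := H.fact a B hB hanB
  set d := t a B with hd
  have hdb : d ≠ b := by
    intro h
    rw [h] at hSa
    have h1 := H.cont b c a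
    have h2 : Real.sqrt (1 - s b c) ≤ q := Real.sqrt_le_sqrt (by linarith)
    linarith
  obtain ⟨e, heβ, heb, hde⟩ : ∃ e ∈ β, e ≠ b ∧ s d e ≠ 0 := by
    by_contra! h
    have h1 : d ∈ SpanOf s β := hBβ ▸ hdB
    have h2 : (∑' y : β, s d (y : Ω)) = 1 := h1
    rw [tsum_eq_single (⟨b, hbβ⟩ : β)
      (fun y hy => h y y.2 (fun h' => hy (Subtype.ext h')))] at h2
    exact hdb ((H.eq1 _ _).1 h2)
  have heB := hββ heβ
  have hae : s e a ≠ 0 := by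
    rw [H.sym, hfd e heB]
    exact mul_ne_zero (by linarith) hde
  have heA : ¬ PerpPt s e A := fun hP => hae (hP a haA)
  have hgA := H.mem e A hA heA
  have hfg := H.fact e A hA heA
  have hepos := H.t_pos hA heA
  set g := t e A with hg
  have hga : s g a ≠ 0 := fun h0 => by
    have := hfg a haA
    rw [h0, mul_zero] at this
    exact hae this
  have hxg : s x g ≠ 0 := by
    rw [hfa g hgA, H.sym a g]
    exact mul_ne_zero hαpos.ne' hga
  have hvg : ∀ v, ¬ PerpPt s v A → ¬ PerpPt s v B → t v B = b → s v g = 0 := by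
    intro v hvA hvB hvb
    have h1 := hover v hvA hvB hvb e heB
    rw [hβ b hbβ e heβ (Ne.symm heb), mul_zero, H.sym, hfg _ (H.mem v A hA hvA)] at h1
    rw [H.fact v A hA hvA g hgA, H.sym _ g]
    rcases mul_eq_zero.1 h1 with h2 | h2
    · exact absurd h2 hepos.ne'
    · rw [h2, mul_zero]
  have hbA : ¬ PerpPt s b A := by
    intro hP
    have := hS2 b hP hbnB
    rw [htb, H.self] at this
    linarith
  have hwA : ¬ PerpPt s w A := by
    intro hP
    have := hS2 w hP hwnB
    rw [htw] at this
    linarith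
  have hbg := hvg b hbA hbnB htb
  have hwg := hvg w hwA hwnB htw
  -- contradiction in the span of b and x
  have hxb : s x b = 0 := by rw [H.sym]; exact hbx
  have hw' : w ∈ SpanOf s ({x, b} : Set Ω) := by rw [Set.pair_comm]; exact hw
  have hfin := H.pair_fact hxb (q := g) (by rw [H.sym]; exact hbg) hw'
  rw [H.sym g w, hwg, H.sym g x, H.sym x w] at hfin
  exact mul_ne_zero hxg hwx0.ne' hfin.symm

end SPHyp

/-- Continuity inequality for the subspace similarity. -/
theorem simSub_continuity [Nonempty Ω]
    (s : Ω → Ω → ℝ) (t : Ω → Set Ω → Ω) (sP : Ω → Set Ω → ℝ)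
    (hval : ∀ x y : Ω, s x y ∈ Set.Icc (0 : ℝ) 1)
    (heq : ∀ x y : Ω, s x y = 1 ↔ x = y)
    (hsym : ∀ x y : Ω, s x y = s y x)
    (hcont : ∀ x y z : Ω,
      s z x ≤ s z y + 1 / 2 * Real.sqrt (1 - s x y) + (1 - s x y))
    (hsPval : ∀ (x : Ω) (A : Set Ω), sP x A ∈ Set.Icc (0 : ℝ) 1)
    (ht_mem : ∀ (x : Ω) (A : Set Ω), IsSubspace s A → ¬ PerpPt s x A → t x A ∈ A)
    (hsP_nonperp : ∀ (x : Ω) (A : Set Ω), IsSubspace s A → ¬ PerpPt s x A →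
      sP x A = s x (t x A))
    (hsP_perp : ∀ (x : Ω) (A : Set Ω), IsSubspace s A → PerpPt s x A → sP x A = 0)
    (hfact : ∀ (x : Ω) (A : Set Ω), IsSubspace s A → ¬ PerpPt s x A →
      ∀ y ∈ A, s x y = s x (t x A) * s (t x A) y)
    (hbound2 : ∀ x y z : Ω, s y z = 0 → s x y + s x z ≤ 1)
    (hbound : ∀ (x : Ω) (A : Set Ω), IsSubspace s A → ∀ y : Ω, PerpPt s y A →
      s x y + sP x A ≤ 1) :
    ∀ A B C : Set Ω, IsSubspace s A → IsSubspace s B → IsSubspace s C →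
      simSub s t sP A B ≤
        simSub s t sP A C + 1 / 2 * Real.sqrt (1 - simSub s t sP B C) +
          (1 - simSub s t sP B C) := by
  intro A B C hA hB hC
  have H : SPHyp s t := ⟨fun x y => (hval x y).1, fun x y => (hval x y).2, heq, hsym, hcont,
    ht_mem, hfact, hbound2⟩
  have tau0 : ∀ (x : Ω) (A B : Set Ω), 0 ≤ tauSim s t sP x A B := by
    intro x A B
    unfold tauSim
    split_ifs
    · linarith [(hsPval x B).2]
    · linarith [(hsPval x A).2]
    · exact (hval _ _).1
  have sim_le : ∀ (A B : Set Ω) (x : Ω), simSub s t sP A B ≤ tauSim s t sP x A B := by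
    intro A B x
    exact csInf_le ⟨0, by rintro _ ⟨y, rfl⟩; exact tau0 y A B⟩ ⟨x, rfl⟩
  have tau1 : ∀ (x : Ω) (A B : Set Ω), PerpPt s x A → tauSim s t sP x A B = 1 - sP x B := by
    intro x A B h
    simp [tauSim, h]
  have tau2 : ∀ (x : Ω) (A B : Set Ω), ¬ PerpPt s x A → PerpPt s x B →
      tauSim s t sP x A B = 1 - sP x A := by
    intro x A B h h'
    simp [tauSim, h, h']
  have tau3 : ∀ (x : Ω) (A B : Set Ω), ¬ PerpPt s x A → ¬ PerpPt s x B →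
      tauSim s t sP x A B = s (t x A) (t x B) := by
    intro x A B h h'
    simp [tauSim, h, h']
  have hSall := sim_le A B
  have hUall := sim_le B C
  have hU0 : 0 ≤ simSub s t sP B C :=
    le_csInf (Set.range_nonempty _) (by rintro _ ⟨y, rfl⟩; exact tau0 y B C)
  set S := simSub s t sP A B
  set σ := simSub s t sP B C
  suffices h : ∀ x, S ≤ tauSim s t sP x A C + 1 / 2 * Real.sqrt (1 - σ) + (1 - σ) by
    have : S - 1 / 2 * Real.sqrt (1 - σ) - (1 - σ) ≤ simSub s t sP A C :=
      le_csInf (Set.range_nonempty _) (by rintro _ ⟨y, rfl⟩; linarith [h y])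
    linarith
  intro x
  have mono : ∀ r : ℝ, σ ≤ r → 1 / 2 * Real.sqrt (1 - r) + (1 - r) ≤
      1 / 2 * Real.sqrt (1 - σ) + (1 - σ) := by
    intro r hr
    have : Real.sqrt (1 - r) ≤ Real.sqrt (1 - σ) := Real.sqrt_le_sqrt (by linarith)
    linarith
  have hsq0 := Real.sqrt_nonneg (1 - σ)
  have hSx := hSall x
  have hUx := hUall x
  by_cases hxA : PerpPt s x A
  · rw [tau1 x A C hxA]
    rw [tau1 x A B hxA] at hSx
    by_cases hxB : PerpPt s x B
    · rw [tau1 x B C hxB] at hUx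
      rw [hsP_perp x B hB hxB] at hSx
      linarith
    · by_cases hxC : PerpPt s x C
      · rw [tau2 x B C hxB hxC] at hUx
        rw [hsP_perp x C hC hxC]
        linarith [(hsPval x B).1]
      · rw [tau3 x B C hxB hxC] at hUx
        rw [hsP_nonperp x B hB hxB] at hSx
        rw [hsP_nonperp x C hC hxC]
        have h1 := hcont (t x C) (t x B) x
        rw [hsym (t x C) (t x B)] at h1
        linarith [mono _ hUx]
  · by_cases hxC : PerpPt s x C
    · rw [tau2 x A C hxA hxC, hsP_nonperp x A hA hxA]
      by_cases hxB : PerpPt s x B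
      · rw [tau2 x A B hxA hxB, hsP_nonperp x A hA hxA] at hSx
        rw [tau1 x B C hxB, hsP_perp x C hC hxC] at hUx
        linarith
      · rw [tau3 x A B hxA hxB] at hSx
        have hbB := ht_mem x B hB hxB
        have hUb := hUall (t x B)
        have hbnB : ¬ PerpPt s (t x B) B := fun hP => by
          have := hP _ hbB
          rw [H.self] at this
          norm_num at this
        have htb := H.t_self hB hbB
        have hα1 := (hval x (t x A)).2
        by_cases hbC : PerpPt s (t x B) C
        · rw [tau2 _ B C hbnB hbC, hsP_nonperp _ B hB hbnB, htb, H.self] at hUb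
          have := (hval (t x A) (t x B)).2
          linarith
        · rw [tau3 _ B C hbnB hbC, htb] at hUb
          have hcC := ht_mem _ C hC hbC
          have h1 := hcont (t x B) (t (t x B) C) (t x A)
          have h2 := hbound2 (t x A) x (t (t x B) C) (hxC _ hcC)
          rw [hsym (t x A) x] at h2
          linarith [mono _ hUb]
    · rw [tau3 x A C hxA hxC]
      by_cases hxB : PerpPt s x B
      · refine H.main4 hA hB hC hxB hxA hxC S (1 - σ) ?_ ?_ ?_ ?_ ?_
        · intro v h1 h2
          rw [← tau3 v A B h1 h2]; exact hSall v
        · intro v h1 h2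
          rw [← hsP_nonperp v B hB h2, ← tau1 v A B h1]; exact hSall v
        · intro v h1 h2
          rw [← hsP_nonperp v A hA h2, ← tau2 v A B h2 h1]; exact hSall v
        · intro v h1 h2
          rw [← tau3 v B C h1 h2]; linarith [hUall v]
        · intro v h1 h2
          rw [← hsP_nonperp v C hC h2, ← tau1 v B C h1]; linarith [hUall v]
      · rw [tau3 x A B hxA hxB] at hSx
        rw [tau3 x B C hxB hxC] at hUx
        have h1 := hcont (t x B) (t x C) (t x A)
        linarith [mono _ hUx]
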